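/- Let l ∈ ℕ and let Θ ⊂ ℝ be a finite set with Θ = −Θ, 0 ∈ Θ, and card Θ = 2l + 1, satisfying the Diophantine condition: there exist c > 0 and P₀ > 0 such that for every natural number m ≥ 1 and every θ ∈ Θ_m \ {0} one has |θ| ≥ c·m^{-P₀}, where Θ_m is the m-fold sumset of Θ. Let N ≥ 1 be a natural number and let P satisfy P > 24·N·P₀ and P > 36·N·l. Then there exists ε₁ ∈ (0,1) such that for every ε ∈ (0, ε₁), setting L̃ := ⌈ε^{-2N/P}⌉, the Lebesgue measure of the resonant set BR := ⋃_{θ ∈ Θ_{3N·L̃} \ {0}} (−θ − ε^{1/2}/(4|θ|), −θ + ε^{1/2}/(4|θ|)) satisfies meas(BR) < ε^{1/6}. -/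

import Mathlib

/-!
An element of `Θ_m` is the sum of a multiset of `m` elements of `Θ`, so `card Θ ≤ k + 1` gives
`card Θ_m ≤ (m + k).choose k ≤ (m + 1) ^ k`. By the Diophantine condition each resonance zone
attached to `Θ_m` has length at most `√ε * m ^ P₀ / (2 * c)`, so the resonant set has measure
`O(m ^ (k + P₀) * √ε)`. With `m = O(ε ^ (-2N/P))` this is `O(ε ^ (1/2 - 2N(k + P₀)/P))`, and the
exponent exceeds `1/6` as soon as `6N(k + P₀) < P`.
-/

open Pointwise MeasureTheory

/-- The `m`-fold sumset `Θ_m = Θ + Θ + ⋯ + Θ` (m copies), with `Θ_0 = {0}`. -/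
noncomputable def sumset (Θ : Finset ℝ) : ℕ → Finset ℝ
  | 0 => {0}
  | (L + 1) => Θ + sumset Θ L

open Asymptotics Filter Topology

/-- The resonance zone attached to `θ` at coupling scale `ε`. At `θ = 0` it is empty, because
division by `0` gives radius `0`. -/
def resonanceZone (ε θ : ℝ) : Set ℝ :=
  Set.Ioo (-θ - √ε / (4 * |θ|)) (-θ + √ε / (4 * |θ|))

/-- The resonant set at coupling scale `ε` of a set `S` of frequencies: the union of the resonance
zones attached to the nonzero elements of `S`. -/
def resonantSet (S : Set ℝ) (ε : ℝ) : Set ℝ :=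
  ⋃ θ ∈ S \ {0}, resonanceZone ε θ

theorem exists_sym_sum_eq_of_mem_sumset {Θ : Finset ℝ} {m : ℕ} {x : ℝ} (hx : x ∈ sumset Θ m) :
    ∃ t : Sym Θ m, ((t : Multiset Θ).map (↑)).sum = x := by
  induction m generalizing x with
  | zero => exact ⟨Sym.nil, by simpa [sumset, eq_comm] using hx⟩
  | succ m ih =>
    obtain ⟨a, ha, b, hb, rfl⟩ := Finset.mem_add.1 hx
    obtain ⟨t, rfl⟩ := ih hb
    exact ⟨Sym.cons ⟨a, ha⟩ t, by rw [Sym.coe_cons, Multiset.map_cons, Multiset.sum_cons]⟩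

theorem card_sumset_le_add_one_pow {Θ : Finset ℝ} {k : ℕ} (hcard : Θ.card ≤ k + 1) (m : ℕ) :
    (sumset Θ m).card ≤ (m + 1) ^ k := by
  classical
  have hsub : sumset Θ m ⊆
      Finset.univ.image fun t : Sym Θ m ↦ ((t : Multiset Θ).map (↑)).sum := fun x hx ↦ by
    simpa using exists_sym_sum_eq_of_mem_sumset hx
  calc (sumset Θ m).card
      ≤ Fintype.card (Sym Θ m) := (Finset.card_le_card hsub).trans Finset.card_image_le
    _ = (Θ.card + m - 1).choose m := by rw [Sym.card_sym_eq_choose, Fintype.card_coe]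
    _ ≤ (k + m).choose m := Nat.choose_le_choose m (by lia)
    _ = (m + k).choose k := by rw [add_comm, Nat.choose_symm_add]
    _ ≤ (m + 1) ^ k := Nat.choose_add_le_add_one_pow m k

theorem volume_resonanceZone (ε θ : ℝ) :
    volume (resonanceZone ε θ) = ENNReal.ofReal (√ε / (2 * |θ|)) := by
  rw [resonanceZone, Real.volume_Ioo]
  congr 1
  ring

theorem volume_resonantSet_le (S : Finset ℝ) {δ : ℝ} (hδ : 0 < δ)
    (hS : ∀ θ ∈ S, θ ≠ 0 → δ ≤ |θ|) (ε : ℝ) :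
    volume (resonantSet S ε) ≤ ENNReal.ofReal (S.card * (√ε / (2 * δ))) := by
  have hzone : ∀ θ ∈ S.erase 0, volume (resonanceZone ε θ) ≤ ENNReal.ofReal (√ε / (2 * δ)) := by
    intro θ hθ
    obtain ⟨hne, hmem⟩ := Finset.mem_erase.1 hθ
    rw [volume_resonanceZone]
    gcongr
    exact hS θ hmem hne
  calc volume (resonantSet S ε)
      = volume (⋃ θ ∈ S.erase 0, resonanceZone ε θ) := by
        simp only [resonantSet, ← Finset.coe_erase, Finset.mem_coe]
    _ ≤ ∑ θ ∈ S.erase 0, volume (resonanceZone ε θ) := measure_biUnion_finset_le _ _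
    _ ≤ (S.erase 0).card • ENNReal.ofReal (√ε / (2 * δ)) := Finset.sum_le_card_nsmul _ _ _ hzone
    _ ≤ S.card • ENNReal.ofReal (√ε / (2 * δ)) := by
        gcongr
        exact Finset.erase_subset 0 S
    _ = ENNReal.ofReal (S.card * (√ε / (2 * δ))) := by
        rw [← ENNReal.ofReal_nsmul, nsmul_eq_mul]

theorem volume_resonantSet_sumset_le {Θ : Finset ℝ} {k : ℕ} (hcard : Θ.card ≤ k + 1)
    {c P₀ : ℝ} (hc : 0 < c) {m : ℕ} (hm : 1 ≤ m)
    (hdioph : ∀ θ ∈ sumset Θ m, θ ≠ 0 → c * (m : ℝ) ^ (-P₀) ≤ |θ|) (ε : ℝ) :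
    volume (resonantSet (sumset Θ m) ε) ≤
      ENNReal.ofReal (2 ^ k / (2 * c) * ((m : ℝ) ^ (k + P₀) * √ε)) := by
  have hm₀ : (0 : ℝ) < m := by exact_mod_cast hm
  have hcard_sumset : ((sumset Θ m).card : ℝ) ≤ (2 * m) ^ k := by
    exact_mod_cast (card_sumset_le_add_one_pow hcard m).trans (by gcongr; lia)
  refine (volume_resonantSet_le _ (by positivity) hdioph ε).trans (ENNReal.ofReal_le_ofReal ?_)
  calc (sumset Θ m).card * (√ε / (2 * (c * (m : ℝ) ^ (-P₀))))
      ≤ (2 * m) ^ k * (√ε / (2 * (c * (m : ℝ) ^ (-P₀)))) := by gcongr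
    _ = 2 ^ k / (2 * c) * ((m : ℝ) ^ (k + P₀) * √ε) := by
        rw [Real.rpow_neg hm₀.le, Real.rpow_add hm₀, Real.rpow_natCast,
          mul_pow]
        field_simp

theorem isLittleO_rpow_rpow_nhdsGT_zero {p q : ℝ} (hpq : p < q) :
    (fun x : ℝ ↦ x ^ q) =o[𝓝[>] 0] fun x ↦ x ^ p := by
  have hpos : ∀ᶠ x : ℝ in 𝓝[>] 0, 0 < x := self_mem_nhdsWithin
  refine (isLittleO_iff_tendsto' (hpos.mono fun x hx h ↦ absurd h (by positivity))).2 ?_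
  have hlim : Tendsto (fun x : ℝ ↦ x ^ (q - p)) (𝓝[>] 0) (𝓝 0) := by
    simpa [(sub_pos.2 hpq).ne'] using
      (Real.continuousAt_rpow_const 0 (q - p) (.inr (sub_pos.2 hpq).le)).tendsto.mono_left
        nhdsWithin_le_nhds
  exact hlim.congr' (hpos.mono fun x hx ↦ Real.rpow_sub hx q p)

theorem eventually_volume_resonantSet_sumset_lt {Θ : Finset ℝ} {k : ℕ} (hcard : Θ.card ≤ k + 1)
    {c P₀ : ℝ} (hc : 0 < c) (hP₀ : 0 ≤ P₀)
    (hdioph : ∀ m : ℕ, 1 ≤ m → ∀ θ ∈ sumset Θ m, θ ≠ 0 → c * (m : ℝ) ^ (-P₀) ≤ |θ|)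
    {m : ℝ → ℕ} {b p : ℝ} (hm : ∀ᶠ ε in 𝓝[>] 0, 1 ≤ m ε)
    (hmO : (fun ε ↦ (m ε : ℝ)) =O[𝓝[>] 0] fun ε ↦ ε ^ b) (hp : p < b * (k + P₀) + 1 / 2) :
    ∀ᶠ ε in 𝓝[>] 0,
      volume (resonantSet (sumset Θ (m ε)) ε) < ENNReal.ofReal (ε ^ p) := by
  have hpos : ∀ᶠ ε : ℝ in 𝓝[>] 0, 0 < ε := self_mem_nhdsWithin
  have hpow : (fun ε ↦ (m ε : ℝ) ^ (k + P₀) * √ε) =O[𝓝[>] 0]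
      fun ε ↦ ε ^ (b * (k + P₀) + 1 / 2) := by
    refine ((hmO.rpow (by positivity) (hpos.mono fun ε hε ↦ by positivity)).mul
      (isBigO_refl (fun ε : ℝ ↦ √ε) _)).congr' .rfl (hpos.mono fun ε hε ↦ ?_)
    beta_reduce
    rw [Real.rpow_add hε, Real.rpow_mul hε.le, Real.sqrt_eq_rpow]
  have hbound : (fun ε ↦ 2 ^ k / (2 * c) * ((m ε : ℝ) ^ (k + P₀) * √ε)) =o[𝓝[>] 0]
      fun ε ↦ ε ^ p :=
    (hpow.trans_isLittleO (isLittleO_rpow_rpow_nhdsGT_zero hp)).const_mul_left _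
  filter_upwards [hpos, hm,
    hbound.eventuallyLT_norm_of_eventually_pos
      (hpos.mono fun ε hε ↦ norm_pos_iff.2 (Real.rpow_pos_of_pos hε p).ne')]
    with ε hε hmε hlt
  rw [Real.norm_of_nonneg (by positivity), Real.norm_of_nonneg (by positivity)] at hlt
  exact (volume_resonantSet_sumset_le hcard hc hmε (hdioph _ hmε) ε).trans_lt
    ((ENNReal.ofReal_lt_ofReal_iff (by positivity)).2 hlt)

theorem isBigO_natCeil_rpow_nhdsGT_zero {b : ℝ} (hb : b ≤ 0) :
    (fun ε : ℝ ↦ (⌈ε ^ b⌉₊ : ℝ)) =O[𝓝[>] 0] fun ε ↦ ε ^ b := by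
  refine IsBigO.of_bound 2 ?_
  filter_upwards [Ioo_mem_nhdsGT zero_lt_one] with ε hε
  have hone : 1 ≤ ε ^ b := Real.one_le_rpow_of_pos_of_le_one_of_nonpos hε.1 hε.2.le hb
  rw [Real.norm_of_nonneg (by positivity), Real.norm_of_nonneg (by linarith)]
  exact Nat.ceil_le_two_mul (by linarith)

theorem stmt_9_general {k : ℕ} {Θ : Finset ℝ} (hcard : Θ.card ≤ k + 1)
    {c P₀ : ℝ} (hc : 0 < c) (hP₀ : 0 ≤ P₀)
    (hdioph : ∀ m : ℕ, 1 ≤ m → ∀ θ ∈ sumset Θ m, θ ≠ 0 → c * (m : ℝ) ^ (-P₀) ≤ |θ|)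
    {N : ℕ} (hN : 1 ≤ N) {P : ℝ} (hP : 6 * (N : ℝ) * (k + P₀) < P) :
    ∃ ε₁ : ℝ, ε₁ ∈ Set.Ioo (0 : ℝ) 1 ∧ ∀ ε : ℝ, ε ∈ Set.Ioo 0 ε₁ →
      volume (resonantSet (sumset Θ (3 * N * ⌈ε ^ (-(2 * (N : ℝ)) / P)⌉₊)) ε) <
        ENNReal.ofReal (ε ^ ((1 : ℝ) / 6)) := by
  have hP_pos : 0 < P := lt_of_le_of_lt (by positivity) hP
  have hb : -(2 * (N : ℝ)) / P ≤ 0 := div_nonpos_of_nonpos_of_nonneg (by simp) hP_pos.le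
  have hm : ∀ᶠ ε : ℝ in 𝓝[>] 0, 1 ≤ 3 * N * ⌈ε ^ (-(2 * (N : ℝ)) / P)⌉₊ := by
    filter_upwards [self_mem_nhdsWithin] with ε (hε : 0 < ε)
    have hceil : 1 ≤ ⌈ε ^ (-(2 * (N : ℝ)) / P)⌉₊ := Nat.one_le_ceil_iff.2 (by positivity)
    exact one_le_mul (by lia) hceil
  have hmO : (fun ε : ℝ ↦ ((3 * N * ⌈ε ^ (-(2 * (N : ℝ)) / P)⌉₊ : ℕ) : ℝ)) =O[𝓝[>] 0]
      fun ε ↦ ε ^ (-(2 * (N : ℝ)) / P) := by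
    simpa only [Nat.cast_mul] using (isBigO_natCeil_rpow_nhdsGT_zero hb).const_mul_left _
  have hexp : (1 : ℝ) / 6 < -(2 * (N : ℝ)) / P * (k + P₀) + 1 / 2 := by
    have : 2 * (N : ℝ) * (k + P₀) / P < 1 / 3 := by
      rw [div_lt_iff₀ hP_pos]
      linarith
    linear_combination this
  obtain ⟨ε₁, hε₁, hsub⟩ := (mem_nhdsGT_iff_exists_mem_Ioc_Ioo_subset one_half_pos).1
    (eventually_volume_resonantSet_sumset_lt hcard hc hP₀ hdioph hm hmO hexp)
  exact ⟨ε₁, ⟨hε₁.1, hε₁.2.trans_lt one_half_lt_one⟩, fun ε hε ↦ hsub hε⟩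

/-- Under `card Θ = 2l + 1`, the Diophantine condition, `P > 24NP₀` and `P > 36Nl`, the
resonant set `BR = ⋃_{θ ∈ Θ_{3N L̃} \ {0}} (−θ − √ε/(4|θ|), −θ + √ε/(4|θ|))`, with
`L̃ = ⌈ε^{-2N/P}⌉`, has Lebesgue measure less than `ε^{1/6}` for all small `ε`. -/
theorem stmt_9 (l : ℕ) (Θ : Finset ℝ) (hsym : ∀ x ∈ Θ, -x ∈ Θ) (h0 : (0:ℝ) ∈ Θ)
    (hcard : Θ.card = 2 * l + 1)
    (c P₀ : ℝ) (hc : 0 < c) (hP₀ : 0 < P₀)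
    (hdioph : ∀ m : ℕ, 1 ≤ m → ∀ θ ∈ sumset Θ m, θ ≠ 0 → c * (m : ℝ) ^ (-P₀) ≤ |θ|)
    (N : ℕ) (hN : 1 ≤ N) (P : ℝ) (hP₁ : 24 * (N : ℝ) * P₀ < P)
    (hP₂ : 36 * (N : ℝ) * l < P) :
    ∃ ε₁ : ℝ, ε₁ ∈ Set.Ioo (0:ℝ) 1 ∧ ∀ ε : ℝ, ε ∈ Set.Ioo 0 ε₁ →
      volume (⋃ θ ∈ ((sumset Θ (3 * N * ⌈ε ^ (-(2 * (N : ℝ)) / P)⌉₊) : Set ℝ) \ {0}),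
          Set.Ioo (-θ - Real.sqrt ε / (4 * |θ|)) (-θ + Real.sqrt ε / (4 * |θ|))) <
        ENNReal.ofReal (ε ^ ((1 : ℝ) / 6)) := by
  have hP_pos : 0 < P := lt_trans (by positivity) hP₁
  have hP : 6 * (N : ℝ) * ((2 * l : ℕ) + P₀) < P := by
    push_cast
    linarith
  exact stmt_9_general hcard.le hc hP₀.le hdioph hN hP
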